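/- For every n ≥ k, G_{n,1} = reverse(G_{n-1,k-1}); and for every n with 1 ≤ n ≤ k-1, G_{n,1} = reverse(s_{n-1}) · a_{n+1}. -/

import Mathlib

/-!
Write `E n = s_{n-1}^{d_n} ⋯ s_0^{d_1}`, so that `E (n+1) = s_n D_n` and
`D_n = s_n^{d_{n+1}-1} E n`. The recursion defining `s_n` becomes `s_n = E n · a_{n+1}` for `n < k`
(`s_eq_of_lt`) and `s_n D_{n-k} = E n` for `n ≥ k` (`s_append_D`).

All the words `s_n^p E n` are palindromes (`palin`): it suffices to treat `p = 0, 1`, and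
`s_n E n` is either `E n · a_{n+1} · E n` or `s_n D_{n-k} reverse(s_n)`, with palindromic centre by
induction. In particular every `D_n` is a palindrome and `E n = s_{n-1} D_{n-1} =
D_{n-1} reverse(s_{n-1})`.

For `n < k` this gives `s_n = D_{n-1} reverse(s_{n-1}) a_{n+1}`. For `n ≥ k`, writing
`s_{n-1} = D_{n-k} G_{n-1,k-1}`, it gives
`s_n D_{n-k} = D_{n-1} reverse(G_{n-1,k-1}) D_{n-k}`, and `D_{n-k}` cancels on the right. That
`D_{n-k}` is a prefix of `s_{n-1}` follows by induction from the same two identities.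
-/

namespace Epi

variable {α : Type*}

/-- `pw w p` is the `p`-fold concatenation `w^p`. -/
def pw (w : List α) : ℕ → List α
  | 0 => []
  | p + 1 => w ++ pw w p

/-- `S k a d m` is the word `s_{m-(k-1)}` of the paper (shifted indexing: `m : ℕ`
ranges over the indices `n ≥ 1-k`). -/
def S (k : ℕ) (a : ℕ → α) (d : ℕ → ℕ) : ℕ → List α
  | m =>
    if h : m < max k 1 then [a ((m + 1) % k + 1)]
    else
      ((List.range (k - 1)).map
          (fun j => pw (S k a d (m - 1 - j)) (d (m + 1 - k - j)))).flatten ++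
        S k a d (m - max k 1)
  termination_by m => m
  decreasing_by all_goals omega

/-- `s k a d n` is the word `s_n`, for `n ≥ 0`. -/
def s (k : ℕ) (a : ℕ → α) (d : ℕ → ℕ) (n : ℕ) : List α :=
  S k a d (n + (k - 1))

/-- `D k a d n` is the word `D_n = s_n^{d_{n+1}-1} s_{n-1}^{d_n} ⋯ s_1^{d_2} s_0^{d_1}`. -/
def D (k : ℕ) (a : ℕ → α) (d : ℕ → ℕ) (n : ℕ) : List α :=
  pw (s k a d n) (d (n + 1) - 1) ++
    ((List.range n).map (fun j => pw (s k a d (n - 1 - j)) (d (n - j)))).flatten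

/-- `G k a d n r` is the word `G_{n,r}`: `s_n` with its prefix of length `|D_{n-r}|` removed. -/
def G (k : ℕ) (a : ℕ → α) (d : ℕ → ℕ) (n r : ℕ) : List α :=
  (s k a d n).drop (D k a d (n - r)).length

/-- `Om k a d n r` is the set `Ω_n^r` of singular `n`-words of the `r`-th kind. -/
def Om (k : ℕ) (a : ℕ → α) (d : ℕ → ℕ) (n r : ℕ) : Set (List α) :=
  { w | w.length = (s k a d n).length ∧
      w <:+:
        ((((G k a d n r).reverse ++ D k a d (n - r) ++ G k a d n r).drop 1).dropLast) }

/-- `w` is a factor of the infinite word `𝐬`. -/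
def FactorS (k : ℕ) (a : ℕ → α) (d : ℕ → ℕ) (w : List α) : Prop :=
  ∃ N, w <:+: s k a d N


theorem pw_comm_self (w : List α) (p : ℕ) : pw w p ++ w = w ++ pw w p := by
  induction p with
  | zero => simp [pw]
  | succ p ih => simp only [pw, List.append_assoc, ih]

theorem reverse_pw (w : List α) (p : ℕ) : (pw w p).reverse = pw w.reverse p := by
  induction p with
  | zero => simp [pw]
  | succ p ih => simp only [pw, List.reverse_append, ih, pw_comm_self]

/-- If `w x = x v` then `w^p x = x v^p`. -/
theorem pw_append_eq {w v x : List α} (h : w ++ x = x ++ v) (p : ℕ) :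
    pw w p ++ x = x ++ pw v p := by
  induction p with
  | zero => simp [pw]
  | succ p ih => rw [pw, pw, List.append_assoc, ih, ← List.append_assoc, h, List.append_assoc]

/-- The product of the first `t` factors of `s_{n-1}^{d_n} s_{n-2}^{d_{n-1}} ⋯ s_0^{d_1}`. When
`d 0 = 0`, the factors beyond the `n`-th are empty, whatever the truncated index `n - 1 - j`. -/
def P (k : ℕ) (a : ℕ → α) (d : ℕ → ℕ) (n t : ℕ) : List α :=
  ((List.range t).map (fun j => pw (s k a d (n - 1 - j)) (d (n - j)))).flatten

/-- The word `s_{n-1}^{d_n} s_{n-2}^{d_{n-1}} ⋯ s_0^{d_1}`. -/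
def E (k : ℕ) (a : ℕ → α) (d : ℕ → ℕ) (n : ℕ) : List α := P k a d n n

section
variable (k : ℕ) (a : ℕ → α) (d : ℕ → ℕ)

theorem P_add (n t u : ℕ) : P k a d n (t + u) = P k a d n t ++ P k a d (n - t) u := by
  simp only [P, List.range_add, List.map_append, List.flatten_append, List.map_map]
  congr 3
  funext j
  simp only [Function.comp]
  rw [show n - 1 - (t + j) = n - t - 1 - j by omega, show n - (t + j) = n - t - j by omega]

theorem P_zero_left (hd0 : d 0 = 0) (t : ℕ) : P k a d 0 t = [] := by
  simp [P, hd0, pw]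

theorem D_eq (n : ℕ) : D k a d n = pw (s k a d n) (d (n + 1) - 1) ++ E k a d n := rfl

theorem E_zero : E k a d 0 = [] := rfl

theorem E_succ' (n : ℕ) : E k a d (n + 1) = pw (s k a d n) (d (n + 1)) ++ E k a d n := by
  rw [E, add_comm n 1, P_add]
  simp [P, E]

theorem E_succ (hd : ∀ i, 1 ≤ i → 1 ≤ d i) (n : ℕ) :
    E k a d (n + 1) = s k a d n ++ D k a d n := by
  have h := hd (n + 1) (by omega)
  rw [E_succ', D_eq, ← List.append_assoc]
  obtain ⟨p, hp⟩ := Nat.exists_eq_add_of_le' h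
  rw [hp]
  rfl

theorem s_zero (hk : 2 ≤ k) : s k a d 0 = [a 1] := by
  rw [s, S, dif_pos (by omega)]
  rw [show 0 + (k - 1) + 1 = k by omega, Nat.mod_self]

theorem s_pos (hk : 2 ≤ k) (hd0 : d 0 = 0) (n : ℕ) (hn : 1 ≤ n) :
    s k a d n = P k a d n (k - 1) ++ S k a d (n - 1) := by
  rw [s, S, dif_neg (by omega), P]
  congr 1
  · congr 2
    funext j
    rw [show n + (k - 1) + 1 - k - j = n - j by omega]
    by_cases hj : j < n
    · rw [s, show n + (k - 1) - 1 - j = n - 1 - j + (k - 1) by omega]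
    · simp [show n - j = 0 by omega, hd0, pw]
  · congr 1
    omega

theorem s_eq_of_lt (hk : 2 ≤ k) (hd0 : d 0 = 0) (n : ℕ) (hn : n < k) :
    s k a d n = E k a d n ++ [a (n + 1)] := by
  rcases Nat.eq_zero_or_pos n with rfl | h
  · rw [s_zero k a d hk, E_zero]
    rfl
  · rw [s_pos k a d hk hd0 n h, show k - 1 = n + (k - 1 - n) by omega, P_add, Nat.sub_self,
      P_zero_left k a d hd0, List.append_nil, ← E]
    congr 1
    rw [S, dif_pos (by omega), Nat.sub_add_cancel h, Nat.mod_eq_of_lt hn]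

theorem s_append_D (hk : 2 ≤ k) (hd0 : d 0 = 0) (hd : ∀ i, 1 ≤ i → 1 ≤ d i) (n : ℕ)
    (hn : k ≤ n) : s k a d n ++ D k a d (n - k) = E k a d n := by
  have hE : E k a d n = P k a d n (k - 1) ++ E k a d (n - k + 1) := by
    rw [E, E, show n - k + 1 = n - (k - 1) by omega, ← P_add,
      show k - 1 + (n - (k - 1)) = n by omega]
  rw [hE, E_succ k a d hd, s_pos k a d hk hd0 n (by omega), s,
    show n - k + (k - 1) = n - 1 by omega, List.append_assoc]

/-- `s_n^p E n` is a palindrome for every `p`. -/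
theorem palin (hk : 2 ≤ k) (hd0 : d 0 = 0) (hd : ∀ i, 1 ≤ i → 1 ≤ d i) (n : ℕ) :
    ∀ p, (pw (s k a d n) p ++ E k a d n).reverse = pw (s k a d n) p ++ E k a d n := by
  induction n using Nat.strong_induction_on with
  | _ n ih =>
    have hE : (E k a d n).reverse = E k a d n := by
      cases n with
      | zero => rfl
      | succ m => rw [E_succ', ih m (by omega)]
    have h1 : s k a d n ++ E k a d n = E k a d n ++ (s k a d n).reverse := by
      by_cases hn : n < k
      · rw [s_eq_of_lt k a d hk hd0 n hn]
        simp [hE]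
      · have h2 := s_append_D k a d hk hd0 hd n (by omega)
        have h3 : (D k a d (n - k)).reverse = D k a d (n - k) := by
          rw [D_eq, ih (n - k) (by omega)]
        have h4 : E k a d n = D k a d (n - k) ++ (s k a d n).reverse := by
          rw [← hE, ← h2, List.reverse_append, h3]
        -- both sides equal `s_n D_{n-k} reverse(s_n)`
        conv_lhs => rw [h4]
        conv_rhs => rw [← h2]
        rw [List.append_assoc]
    intro p
    rw [List.reverse_append, hE, reverse_pw, pw_append_eq h1]

theorem reverse_D (hk : 2 ≤ k) (hd0 : d 0 = 0) (hd : ∀ i, 1 ≤ i → 1 ≤ d i) (n : ℕ) :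
    (D k a d n).reverse = D k a d n := by
  rw [D_eq, palin k a d hk hd0 hd]

theorem reverse_E (hk : 2 ≤ k) (hd0 : d 0 = 0) (hd : ∀ i, 1 ≤ i → 1 ≤ d i) (n : ℕ) :
    (E k a d n).reverse = E k a d n := palin k a d hk hd0 hd n 0

theorem E_succ_rev (hk : 2 ≤ k) (hd0 : d 0 = 0) (hd : ∀ i, 1 ≤ i → 1 ≤ d i) (n : ℕ) :
    E k a d (n + 1) = D k a d n ++ (s k a d n).reverse := by
  rw [← reverse_E k a d hk hd0 hd, E_succ k a d hd, List.reverse_append,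
    reverse_D k a d hk hd0 hd]

theorem D_prefix_succ (hk : 2 ≤ k) (hd0 : d 0 = 0) (hd : ∀ i, 1 ≤ i → 1 ≤ d i) (n : ℕ) :
    D k a d n <+: D k a d (n + 1) := by
  rw [← reverse_D k a d hk hd0 hd (n + 1), D_eq k a d (n + 1), List.reverse_append,
    reverse_E k a d hk hd0 hd, E_succ_rev k a d hk hd0 hd, List.append_assoc]
  exact List.prefix_append _ _

theorem D_prefix_of_le (hk : 2 ≤ k) (hd0 : d 0 = 0) (hd : ∀ i, 1 ≤ i → 1 ≤ d i) {m n : ℕ}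
    (h : m ≤ n) : D k a d m <+: D k a d n := by
  induction n, h using Nat.le_induction with
  | base => exact List.prefix_rfl
  | succ n _ ih => exact ih.trans (D_prefix_succ k a d hk hd0 hd n)

/-- If `s_{n+k-1} = D_n x`, then `s_{n+k} = D_{n+k-1} reverse(x)`. -/
theorem s_eq_of_ge (hk : 2 ≤ k) (hd0 : d 0 = 0) (hd : ∀ i, 1 ≤ i → 1 ≤ d i) (n : ℕ)
    (x : List α) (hx : s k a d (n + k - 1) = D k a d n ++ x) :
    s k a d (n + k) = D k a d (n + k - 1) ++ x.reverse := by
  have h1 := s_append_D k a d hk hd0 hd (n + k) (by omega)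
  have h2 := E_succ_rev k a d hk hd0 hd (n + k - 1)
  rw [show n + k - 1 + 1 = n + k by omega, hx, List.reverse_append, reverse_D k a d hk hd0 hd] at h2
  rw [Nat.add_sub_cancel, h2, ← List.append_assoc] at h1
  exact List.append_cancel_right h1

theorem D_prefix_s (hk : 2 ≤ k) (hd0 : d 0 = 0) (hd : ∀ i, 1 ≤ i → 1 ≤ d i) (n : ℕ) :
    D k a d n <+: s k a d (n + 1) := by
  induction n with
  | zero =>
    rw [s_eq_of_lt k a d hk hd0 1 (by omega), E_succ_rev k a d hk hd0 hd, List.append_assoc]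
    exact List.prefix_append _ _
  | succ n ih =>
    by_cases hn : n + 2 < k
    · rw [s_eq_of_lt k a d hk hd0 _ hn, E_succ_rev k a d hk hd0 hd, List.append_assoc]
      exact List.prefix_append _ _
    · obtain ⟨x, hx⟩ :=
        (D_prefix_of_le k a d hk hd0 hd (show n + 2 - k ≤ n by omega)).trans ih
      have := s_eq_of_ge k a d hk hd0 hd (n + 2 - k) x
        (by rw [hx]; congr 1; omega)
      rw [show n + 2 - k + k = n + 2 by omega] at this
      exact ⟨_, this.symm⟩

theorem G_eq_of_eq {n r : ℕ} {x : List α} (h : s k a d n = D k a d (n - r) ++ x) :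
    G k a d n r = x := by
  rw [G, h, List.drop_left]

end

theorem stmt7 {α : Type*} (k : ℕ) (hk : 2 ≤ k) (a : ℕ → α)
    (ha : ∀ i j, 1 ≤ i → i ≤ k → 1 ≤ j → j ≤ k → a i = a j → i = j)
    (d : ℕ → ℕ) (hd0 : d 0 = 0) (hd : ∀ i, 1 ≤ i → 1 ≤ d i) :
    (∀ n : ℕ, k ≤ n → G k a d n 1 = (G k a d (n - 1) (k - 1)).reverse) ∧
    (∀ n : ℕ, 1 ≤ n → n ≤ k - 1 →
        G k a d n 1 = (s k a d (n - 1)).reverse ++ [a (n + 1)]) := by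
  refine ⟨fun n hn => ?_, fun n h1 hn => ?_⟩
  · obtain ⟨m, rfl⟩ := Nat.exists_eq_add_of_le' hn
    have hpre : D k a d m <+: s k a d (m + k - 1) := by
      have := D_prefix_s k a d hk hd0 hd (m + k - 2)
      rw [show m + k - 2 + 1 = m + k - 1 by omega] at this
      exact (D_prefix_of_le k a d hk hd0 hd (by omega)).trans this
    obtain ⟨x, hx⟩ := hpre
    rw [G_eq_of_eq k a d (s_eq_of_ge k a d hk hd0 hd m x hx.symm)]
    congr 1
    refine (G_eq_of_eq k a d ?_).symm
    rw [show m + k - 1 - (k - 1) = m by omega, hx]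
  · apply G_eq_of_eq
    rw [s_eq_of_lt k a d hk hd0 n (by omega), ← List.append_assoc,
      ← E_succ_rev k a d hk hd0 hd, Nat.sub_add_cancel h1]

end Epi
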